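/- arXiv:2512.24736 — 2 statements merged into one kernel-verified Lean document; each statement's English description precedes it below -/
import Mathlib

section
/- Let ξ be a k-dimensional Gaussian random vector with mean μ and positive definite covariance matrix Σ, B an m×k matrix with rows b_i^⊤, and x ∈ ℝ^m a point such that the system Bz ≤ x is nondegenerate (i.e., for every index set I ⊂ {1,…,m} for which there exists z with b_i^⊤z = x_i for i ∈ I and b_i^⊤z < x_i for i ∉ I, the vectors {b_i}_{i∈I} are linearly independent). Define S^(i) = Σ − (1/(b_i^⊤Σb_i)) Σb_i b_i^⊤Σ, w^(i) = μ + ((x_i − b_i^⊤μ)/(b_i^⊤Σb_i)) Σb_i, and let L^(i) be a k×(k−1) matrix of rank k−1 with S^(i) = L^(i)(L^(i))^⊤. Then ∂/∂x_i Pr{Bξ ≤ x} = g_i(x_i) · Pr{B^(i)L^(i)ξ^(i) ≤ x^(i) − B^(i)w^(i)}, where ξ^(i) is a standard (k−1)-dimensional Gaussian vector, B^(i) and x^(i) result from B and x by deleting row/component i, and g_i is the one-dimensional normal density with mean b_i^⊤μ and variance b_i^⊤Σb_i. Moreover, the inequality system B^(i)L^(i)y ≤ x^(i) − B^(i)w^(i)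 is nondegenerate. -/
open MeasureTheory ProbabilityTheory Filter Set Matrix
open scoped ENNReal NNReal

/-- Density of the multivariate normal distribution `𝒩(μ, Σ)` on `ℝ^k`. -/
noncomputable def gaussianPdf {k : ℕ} (μ : Fin k → ℝ) (Sig : Matrix (Fin k) (Fin k) ℝ)
    (z : Fin k → ℝ) : ℝ :=
  (Real.sqrt ((2 * Real.pi) ^ k * Sig.det))⁻¹ *
    Real.exp (-(1 / 2) * ((z - μ) ⬝ᵥ Sig⁻¹.mulVec (z - μ)))

/-- The multivariate normal distribution `𝒩(μ, Σ)` on `ℝ^k`. -/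
noncomputable def gaussianMeasure {k : ℕ} (μ : Fin k → ℝ)
    (Sig : Matrix (Fin k) (Fin k) ℝ) : Measure (Fin k → ℝ) :=
  volume.withDensity (fun z => ENNReal.ofReal (gaussianPdf μ Sig z))

/-- The inequality system `Az ≤ c` is nondegenerate: for every active index set `I`
(realized by some `z` with `Aᵢz = cᵢ` for `i ∈ I` and `Aᵢz < cᵢ` otherwise), the
rows `{Aᵢ}_{i ∈ I}` are linearly independent (i.e. `rank {Aᵢ}_{i∈I} = #I`). -/
def NondegenerateSystem {n p : ℕ} (A : Matrix (Fin n) (Fin p) ℝ) (c : Fin n → ℝ) :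
    Prop :=
  ∀ I : Finset (Fin n),
    (∃ z : Fin p → ℝ, (∀ i ∈ I, A i ⬝ᵥ z = c i) ∧ ∀ i ∉ I, A i ⬝ᵥ z < c i) →
    LinearIndependent ℝ (fun i : I => A i)

/-!
The vector `ξ` is distributed as `w(T) + L η`, where `T ∼ 𝒩(bᵢᵀμ, bᵢᵀΣbᵢ)` plays the role of
`bᵢᵀξ`, the standard Gaussian `η` is independent of `T`, and `w(t)` is the mean of `ξ`
conditioned on `bᵢᵀξ = t`. Hence `Pr{Bξ ≤ x}` is, as a function of `xᵢ`, the integral over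
`t ≤ xᵢ` of the density of `T` times the probability of the slice `{y | B⁽ⁱ⁾Ly ≤ x⁽ⁱ⁾ - B⁽ⁱ⁾w(t)}`,
and its derivative is the integrand at `xᵢ`, provided the slice probability is continuous there.
The latter holds when the reduced system is nondegenerate: no row active at a solution vanishes,
so almost every point satisfies either all inequalities strictly or violates one. Nondegeneracy
passes from `Bz ≤ x` to the reduced system because `a ↦ aᵀL` has kernel `span{bᵢ}`, and a
solution `y` of the latter yields the solution `w + Ly` of the former, with `i` active in
addition.
-/

section Preliminaries

theorem map_withDensity_comp {α β : Type*} [MeasurableSpace α] [MeasurableSpace β] (ρ : Measure α)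
    {φ : α → β} (hφ : Measurable φ) {f : β → ℝ≥0∞} (hf : Measurable f) :
    (ρ.withDensity (f ∘ φ)).map φ = (ρ.map φ).withDensity f := by
  ext s hs
  rw [Measure.map_apply hφ hs, withDensity_apply _ (hφ hs), withDensity_apply _ hs,
    setLIntegral_map hs hf hφ, Function.comp_def]

theorem gaussianReal_eq_map_zero_one (c : ℝ) {v : ℝ} (hv : 0 ≤ v) :
    gaussianReal c v.toNNReal = (gaussianReal 0 1).map fun u => √v * u + c := by
  have hvar : (⟨√v ^ 2, sq_nonneg _⟩ : ℝ≥0) * 1 = v.toNNReal := by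
    ext; simp [hv]
  calc gaussianReal c v.toNNReal
      = ((gaussianReal 0 1).map (√v * ·)).map (· + c) := by
        rw [gaussianReal_map_const_mul, gaussianReal_map_add_const, mul_zero, zero_add]
        exact congrArg _ hvar.symm
    _ = (gaussianReal 0 1).map fun u => √v * u + c :=
        Measure.map_map (by fun_prop) (by fun_prop)

theorem volume_setOf_dotProduct_eq {ι : Type*} [Fintype ι] {a : ι → ℝ} (ha : a ≠ 0) (c : ℝ) :
    volume {y | a ⬝ᵥ y = c} = 0 := by
  set φ : (ι → ℝ) →ₗ[ℝ] ℝ := dotProductBilin ℝ ℝ a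
  have hφ : Function.Surjective φ := LinearMap.surjective fun h =>
    ha (dotProduct_self_eq_zero.1 (LinearMap.congr_fun h a))
  obtain ⟨r, -, hr⟩ := φ.exists_map_addHaar_eq_smul_addHaar volume volume hφ
  have hφm : Measurable φ := φ.continuous_of_finiteDimensional.measurable
  calc volume (φ ⁻¹' {c}) = Measure.map φ volume {c} :=
        (Measure.map_apply hφm (measurableSet_singleton c)).symm
    _ = 0 := by rw [hr, Measure.smul_apply, Real.volume_singleton, smul_zero]

theorem hasDerivAt_integral_Iic {E : Type*} [NormedAddCommGroup E] [NormedSpace ℝ E]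
    [CompleteSpace E] {f : ℝ → E} (hf : Integrable f) {t : ℝ} (hft : ContinuousAt f t) :
    HasDerivAt (fun s => ∫ u in Iic s, f u) (f t) t := by
  have hsplit : ∀ s, ∫ u in Iic s, f u = (∫ u in Iic t, f u) + ∫ u in t..s, f u := fun s => by
    rw [← intervalIntegral.integral_Iic_sub_Iic hf.integrableOn hf.integrableOn,
      add_sub_cancel]
  refine HasDerivAt.congr_of_eventuallyEq ?_ (.of_forall hsplit)
  exact (intervalIntegral.integral_hasDerivAt_right hf.intervalIntegrable
    hf.aestronglyMeasurable.stronglyMeasurableAtFilter hft).const_add _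

variable {Y : Type*} [MeasurableSpace Y] {γ : Measure Y} [IsFiniteMeasure γ]
  {f : ℝ → ℝ} {P : Set (ℝ × Y)}

theorem measureReal_withDensity_prod_setOf_le (hf : Integrable f) (hf₀ : 0 ≤ f)
    (hP : MeasurableSet P) (s : ℝ) :
    ((volume.withDensity fun u => ENNReal.ofReal (f u)).prod γ).real {p | p.1 ≤ s ∧ p ∈ P} =
      ∫ u in Iic s, f u * γ.real (Prod.mk u ⁻¹' P) := by
  set ρ := volume.withDensity fun u => ENNReal.ofReal (f u)
  have hset : {p : ℝ × Y | p.1 ≤ s ∧ p ∈ P} = P ∩ Iic s ×ˢ univ := by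
    ext p; simp [and_comm]
  calc (ρ.prod γ).real {p | p.1 ≤ s ∧ p ∈ P}
      = (∫⁻ u in Iic s, γ (Prod.mk u ⁻¹' P) ∂ρ).toReal := by
        rw [hset, measureReal_def, ← Measure.restrict_apply hP, ← Measure.prod_restrict,
          Measure.restrict_univ, Measure.prod_apply hP]
    _ = ∫ u in Iic s, γ.real (Prod.mk u ⁻¹' P) ∂ρ :=
        (integral_toReal (measurable_measure_prodMk_left hP).aemeasurable
          (.of_forall fun _ => measure_lt_top _ _)).symm
    _ = ∫ u in Iic s, f u * γ.real (Prod.mk u ⁻¹' P) := by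
        rw [setIntegral_withDensity_eq_setIntegral_toReal_smul₀
          hf.aemeasurable.ennreal_ofReal.restrict (.of_forall fun _ => ENNReal.ofReal_lt_top) _
          measurableSet_Iic]
        simp only [ENNReal.toReal_ofReal (hf₀ _), smul_eq_mul]

theorem hasDerivAt_measureReal_withDensity_prod (hf : Integrable f) (hf₀ : 0 ≤ f)
    (hP : MeasurableSet P) {t : ℝ} (hft : ContinuousAt f t)
    (hPt : ContinuousAt (fun u => γ.real (Prod.mk u ⁻¹' P)) t) :
    HasDerivAt (fun s =>
        ((volume.withDensity fun u => ENNReal.ofReal (f u)).prod γ).real {p | p.1 ≤ s ∧ p ∈ P})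
      (f t * γ.real (Prod.mk t ⁻¹' P)) t := by
  simp only [measureReal_withDensity_prod_setOf_le hf hf₀ hP]
  have hint : Integrable fun u => f u * γ.real (Prod.mk u ⁻¹' P) := by
    refine hf.mul_bdd (c := γ.real univ)
      (measurable_measure_prodMk_left hP).ennreal_toReal.aestronglyMeasurable
      (.of_forall fun u => ?_)
    rw [Real.norm_of_nonneg measureReal_nonneg]
    exact measureReal_mono (subset_univ _)
  exact hasDerivAt_integral_Iic hint (hft.mul hPt)

theorem linearIndepOn_comp_of_ker_eq_span_singleton {ι K V W : Type*} [Field K] [AddCommGroup V]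
    [Module K V] [AddCommGroup W] [Module K W] {v : ι → V} {s : Set ι} {i : ι}
    (hv : LinearIndepOn K v (insert i s)) (hi : i ∉ s) (φ : V →ₗ[K] W)
    (hφ : LinearMap.ker φ = Submodule.span K {v i}) : LinearIndepOn K (φ ∘ v) s := by
  refine LinearIndependent.map (hv.mono (subset_insert i s)) ?_
  rw [hφ, Submodule.disjoint_span_singleton, ← image_eq_range]
  exact fun hmem => absurd hmem (hv.notMem_span_of_insert hi)

end Preliminaries

section GaussianMeasure

variable {k : ℕ}

theorem continuous_gaussianPdf (μ : Fin k → ℝ) (Sig : Matrix (Fin k) (Fin k) ℝ) :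
    Continuous (gaussianPdf μ Sig) := by
  unfold gaussianPdf
  fun_prop

theorem measurable_ofReal_gaussianPdf (μ : Fin k → ℝ) (Sig : Matrix (Fin k) (Fin k) ℝ) :
    Measurable fun z => ENNReal.ofReal (gaussianPdf μ Sig z) :=
  (continuous_gaussianPdf μ Sig).measurable.ennreal_ofReal

theorem gaussianPdf_zero_one_cons (u : ℝ) (y : Fin k → ℝ) :
    gaussianPdf (0 : Fin (k + 1) → ℝ) 1 (Fin.cons u y) =
      gaussianPDFReal 0 1 u * gaussianPdf (0 : Fin k → ℝ) 1 y := by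
  have hdot : (Fin.cons u y : Fin (k + 1) → ℝ) ⬝ᵥ Fin.cons u y = u ^ 2 + y ⬝ᵥ y := by
    simp [dotProduct, Fin.sum_univ_succ, sq]
  have hexp : -(1 / 2) * (u ^ 2 + y ⬝ᵥ y) = -u ^ 2 / 2 + -(1 / 2) * (y ⬝ᵥ y) := by ring
  simp only [gaussianPdf, gaussianPDFReal, det_one, mul_one, inv_one, one_mulVec, sub_zero,
    NNReal.coe_one, hdot, hexp, Real.exp_add, pow_succ (2 * Real.pi) k]
  rw [Real.sqrt_mul (by positivity), mul_inv]
  ring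

theorem gaussianMeasure_zero_one_succ :
    gaussianMeasure (0 : Fin (k + 1) → ℝ) 1 =
      ((gaussianReal 0 1).prod (gaussianMeasure (0 : Fin k → ℝ) 1)).map
        fun p => Fin.cons p.1 p.2 := by
  have hpres := (volume_preserving_piFinSuccAbove (fun _ : Fin (k + 1) => ℝ) 0).symm
  have hdensity : (fun p : ℝ × (Fin k → ℝ) =>
        gaussianPDF 0 1 p.1 * ENNReal.ofReal (gaussianPdf 0 1 p.2)) =
      (fun z => ENNReal.ofReal (gaussianPdf 0 1 z)) ∘
        (MeasurableEquiv.piFinSuccAbove (fun _ : Fin (k + 1) => ℝ) 0).symm := by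
    ext p
    simp [gaussianPDF, ← ENNReal.ofReal_mul (gaussianPDFReal_nonneg 0 1 p.1),
      ← gaussianPdf_zero_one_cons, Fin.insertNthEquiv]
  rw [gaussianReal_of_var_ne_zero _ one_ne_zero]
  unfold gaussianMeasure
  have hcons : (fun p : ℝ × (Fin k → ℝ) => (Fin.cons p.1 p.2 : Fin (k + 1) → ℝ)) =
      (MeasurableEquiv.piFinSuccAbove (fun _ : Fin (k + 1) => ℝ) 0).symm := by
    ext p
    simp [Fin.insertNthEquiv]
  rw [prod_withDensity (measurable_gaussianPDF 0 1) (measurable_ofReal_gaussianPdf 0 1), hdensity,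
    ← Measure.volume_eq_prod, hcons,
    map_withDensity_comp _ hpres.measurable (measurable_ofReal_gaussianPdf 0 1), hpres.map_eq]

instance isProbabilityMeasure_gaussianMeasure_zero_one :
    IsProbabilityMeasure (gaussianMeasure (0 : Fin k → ℝ) 1) := by
  induction k with
  | zero =>
    constructor
    simp [gaussianMeasure, gaussianPdf, volume_pi]
  | succ k ih =>
    rw [gaussianMeasure_zero_one_succ]
    exact Measure.isProbabilityMeasure_map (by fun_prop)

theorem gaussianPdf_zero_one_eq (μ v : Fin k → ℝ) {M : Matrix (Fin k) (Fin k) ℝ}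
    (hM : IsUnit M.det) :
    gaussianPdf 0 1 v = |M.det| * gaussianPdf μ (M * Mᵀ) (M *ᵥ v + μ) := by
  have hMt : IsUnit Mᵀ.det := by rwa [det_transpose]
  have hquad : (M *ᵥ v) ⬝ᵥ ((M * Mᵀ)⁻¹ *ᵥ (M *ᵥ v)) = v ⬝ᵥ v := by
    rw [Matrix.mul_inv_rev, mulVec_mulVec, Matrix.mul_assoc, nonsing_inv_mul _ hM, Matrix.mul_one,
      ← vecMul_transpose, ← dotProduct_mulVec, mulVec_mulVec, mul_nonsing_inv _ hMt, one_mulVec]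
  have hdet : |M.det| ≠ 0 := abs_ne_zero.2 hM.ne_zero
  simp only [gaussianPdf, add_sub_cancel_right, sub_zero, inv_one, one_mulVec, det_one, mul_one,
    hquad, det_mul, det_transpose]
  rw [Real.sqrt_mul (by positivity), Real.sqrt_mul_self_eq_abs, mul_inv]
  field_simp

theorem map_gaussianMeasure_zero_one (μ : Fin k → ℝ) {M : Matrix (Fin k) (Fin k) ℝ}
    (hM : IsUnit M.det) :
    (gaussianMeasure 0 1).map (fun v => M *ᵥ v + μ) = gaussianMeasure μ (M * Mᵀ) := by
  have hvol : volume.map (fun v => M *ᵥ v + μ) = ENNReal.ofReal |M.det⁻¹| • volume := by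
    have hcomp : (fun v => M *ᵥ v + μ) = (· + μ) ∘ toLin' M := rfl
    rw [hcomp, ← Measure.map_map (by fun_prop) (by fun_prop),
      Real.map_matrix_volume_pi_eq_smul_volume_pi hM.ne_zero, Measure.map_smul,
      map_add_right_eq_self]
  have hdensity : (fun v => ENNReal.ofReal (gaussianPdf 0 1 v)) =
      (ENNReal.ofReal |M.det| • fun z => ENNReal.ofReal (gaussianPdf μ (M * Mᵀ) z)) ∘
        fun v => M *ᵥ v + μ := by
    ext v
    simp [gaussianPdf_zero_one_eq μ v hM, ENNReal.ofReal_mul]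
  have hpdf := measurable_ofReal_gaussianPdf μ (M * Mᵀ)
  rw [gaussianMeasure, hdensity, map_withDensity_comp _ (by fun_prop) (hpdf.const_smul _), hvol,
    withDensity_smul_measure, withDensity_smul _ hpdf, smul_smul,
    ← ENNReal.ofReal_mul (abs_nonneg _), ← abs_mul, inv_mul_cancel₀ hM.ne_zero, abs_one,
    ENNReal.ofReal_one, one_smul, gaussianMeasure]

end GaussianMeasure

section PrependCol

variable {n : Type*} {k : ℕ}

/-- The matrix `[q | L]` obtained from `L` by prepending the column `q`. -/
def prependCol (q : n → ℝ) (L : Matrix n (Fin k) ℝ) : Matrix n (Fin (k + 1)) ℝ :=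
  of fun a => Fin.cons (q a) (L a)

theorem prependCol_mulVec_cons (q : n → ℝ) (L : Matrix n (Fin k) ℝ) (u : ℝ) (y : Fin k → ℝ) :
    prependCol q L *ᵥ Fin.cons u y = u • q + L *ᵥ y := by
  ext a
  simp [prependCol, mulVec, dotProduct, Fin.sum_univ_succ, mul_comm]

theorem prependCol_mul_transpose (q : n → ℝ) (L : Matrix n (Fin k) ℝ) :
    prependCol q L * (prependCol q L)ᵀ = vecMulVec q q + L * Lᵀ := by
  ext a a'
  simp [prependCol, mul_apply, Fin.sum_univ_succ, vecMulVec_apply]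

end PrependCol

section Conditioning

variable {n : Type*} [Fintype n]

/-- The conditional mean of `ξ ∼ 𝒩(μ, Σ)` given `bᵀξ = t`; this is `w⁽ⁱ⁾` for `b = bᵢ`, `t = xᵢ`. -/
noncomputable def condMean (μ : n → ℝ) (Sig : Matrix n n ℝ) (b : n → ℝ) (t : ℝ) : n → ℝ :=
  μ + ((t - b ⬝ᵥ μ) / (b ⬝ᵥ Sig *ᵥ b)) • Sig *ᵥ b

/-- The conditional covariance of `ξ ∼ 𝒩(μ, Σ)` given the value of `bᵀξ`; this is `S⁽ⁱ⁾` for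
`b = bᵢ`. For `b = 0` it is `Σ`, by the convention `0⁻¹ = 0`. -/
noncomputable def condCov (Sig : Matrix n n ℝ) (b : n → ℝ) : Matrix n n ℝ :=
  Sig - (b ⬝ᵥ Sig *ᵥ b)⁻¹ • vecMulVec (Sig *ᵥ b) (b ᵥ* Sig)

theorem dotProduct_condMean (μ : n → ℝ) {Sig : Matrix n n ℝ} {b : n → ℝ}
    (hv : b ⬝ᵥ Sig *ᵥ b ≠ 0) (t : ℝ) : b ⬝ᵥ condMean μ Sig b t = t := by
  rw [condMean, dotProduct_add, dotProduct_smul, smul_eq_mul, div_mul_cancel₀ _ hv,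
    add_sub_cancel]

@[fun_prop]
theorem continuous_condMean (μ : n → ℝ) (Sig : Matrix n n ℝ) (b : n → ℝ) :
    Continuous (condMean μ Sig b) := by
  unfold condMean
  fun_prop

variable {o : Type*} [Fintype o] {Sig : Matrix n n ℝ} {b : n → ℝ} {L : Matrix n o ℝ}

theorem ne_zero_of_condCov_eq_mul_transpose [DecidableEq n] (hSig : IsUnit Sig)
    (hL : condCov Sig b = L * Lᵀ) (hcard : Fintype.card o < Fintype.card n) : b ≠ 0 := by
  rintro rfl
  have hfactor : Sig = L * Lᵀ := by simpa [condCov] using hL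
  have hrank : Sig.rank ≤ Fintype.card o :=
    hfactor ▸ (rank_mul_le_left L Lᵀ).trans (rank_le_card_width L)
  exact (hrank.trans_lt hcard).ne (rank_of_isUnit Sig hSig)

theorem vecMul_condCov_eq_zero_iff [DecidableEq n] (hSig : IsUnit Sig)
    (hv : b ⬝ᵥ Sig *ᵥ b ≠ 0) {a : n → ℝ} :
    a ᵥ* condCov Sig b = 0 ↔ a ∈ Submodule.span ℝ {b} := by
  have hvecMul : a ᵥ* condCov Sig b =
      (a - ((b ⬝ᵥ Sig *ᵥ b)⁻¹ * (a ⬝ᵥ Sig *ᵥ b)) • b) ᵥ* Sig := by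
    rw [condCov, vecMul_sub, vecMul_smul, vecMul_vecMulVec, smul_smul, sub_vecMul, smul_vecMul]
  rw [hvecMul, Submodule.mem_span_singleton]
  constructor
  · intro h
    have hzero := vecMul_injective_of_isUnit hSig (h.trans (zero_vecMul Sig).symm)
    exact ⟨_, (sub_eq_zero.1 hzero).symm⟩
  · rintro ⟨c, rfl⟩
    rw [smul_dotProduct, smul_eq_mul, mul_left_comm, inv_mul_cancel₀ hv, mul_one, sub_self,
      zero_vecMul]

theorem ker_vecMulLinear_of_condCov_eq_mul_transpose [DecidableEq n] (hSig : IsUnit Sig)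
    (hv : b ⬝ᵥ Sig *ᵥ b ≠ 0) (hL : condCov Sig b = L * Lᵀ) :
    LinearMap.ker L.vecMulLinear = Submodule.span ℝ {b} := by
  ext a
  rw [LinearMap.mem_ker, vecMulLinear_apply, ← vecMul_condCov_eq_zero_iff hSig hv, hL,
    ← conjTranspose_eq_transpose_of_trivial, vecMul_self_mul_conjTranspose_eq_zero]

variable {k : ℕ}

theorem prependCol_mul_transpose_of_condCov_eq (hSig : Sig.IsSymm) (hv : 0 < b ⬝ᵥ Sig *ᵥ b)
    {L : Matrix n (Fin k) ℝ} (hL : condCov Sig b = L * Lᵀ) :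
    prependCol ((√(b ⬝ᵥ Sig *ᵥ b))⁻¹ • Sig *ᵥ b) L *
      (prependCol ((√(b ⬝ᵥ Sig *ᵥ b))⁻¹ • Sig *ᵥ b) L)ᵀ = Sig := by
  have hsymm : b ᵥ* Sig = Sig *ᵥ b := by rw [← mulVec_transpose, hSig.eq]
  rw [prependCol_mul_transpose, ← hL, condCov, hsymm, smul_vecMulVec, vecMulVec_smul, smul_smul,
    ← mul_inv, Real.mul_self_sqrt hv.le, add_sub_cancel]

theorem gaussianMeasure_eq_map_condMean (μ : Fin (k + 1) → ℝ)
    {Sig : Matrix (Fin (k + 1)) (Fin (k + 1)) ℝ} (hSig : Sig.PosDef) {b : Fin (k + 1) → ℝ}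
    (hv : 0 < b ⬝ᵥ Sig *ᵥ b) {L : Matrix (Fin (k + 1)) (Fin k) ℝ}
    (hL : condCov Sig b = L * Lᵀ) :
    gaussianMeasure μ Sig =
      ((gaussianReal (b ⬝ᵥ μ) (b ⬝ᵥ Sig *ᵥ b).toNNReal).prod (gaussianMeasure 0 1)).map
        fun p => L *ᵥ p.2 + condMean μ Sig b p.1 := by
  set σ := √(b ⬝ᵥ Sig *ᵥ b) with hσ
  set M := prependCol (σ⁻¹ • Sig *ᵥ b) L
  have hM : M * Mᵀ = Sig := prependCol_mul_transpose_of_condCov_eq hSig.isHermitian hv hL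
  have hMdet : IsUnit M.det := by
    refine isUnit_of_mul_isUnit_left (y := Mᵀ.det) ?_
    rw [← det_mul, hM]
    exact (isUnit_iff_isUnit_det Sig).1 hSig.isUnit
  have hparam : ∀ (u : ℝ) (y : Fin k → ℝ), M *ᵥ (Fin.cons u y) + μ =
      L *ᵥ y + condMean μ Sig b (σ * u + b ⬝ᵥ μ) := fun u y => by
    have hcoeff : σ * u / (b ⬝ᵥ Sig *ᵥ b) = u * σ⁻¹ := by
      rw [← Real.mul_self_sqrt hv.le, ← hσ]
      field_simp
    rw [prependCol_mulVec_cons, condMean, add_sub_cancel_right, hcoeff, smul_smul]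
    abel
  rw [gaussianReal_eq_map_zero_one _ hv.le,
    ← Measure.map_id (μ := gaussianMeasure (0 : Fin k → ℝ) 1),
    Measure.map_prod_map _ _ (by fun_prop) measurable_id,
    Measure.map_map (by fun_prop) (by fun_prop)]
  conv_lhs => rw [← hM, ← map_gaussianMeasure_zero_one μ hMdet, gaussianMeasure_zero_one_succ,
    Measure.map_map (by fun_prop) (by fun_prop)]
  congr 1
  ext1 p
  exact hparam p.1 p.2

end Conditioning

section Reduction

variable {m p q : ℕ} (B : Matrix (Fin (m + 1)) (Fin p) ℝ) (i : Fin (m + 1))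
  (L : Matrix (Fin p) (Fin q) ℝ) (y : Fin q → ℝ) (w : Fin p → ℝ)

theorem mulVec_mulVec_add_succAbove (j : Fin m) :
    (B *ᵥ (L *ᵥ y + w)) (i.succAbove j) =
      ((B.submatrix i.succAbove id * L) *ᵥ y) j + (B.submatrix i.succAbove id *ᵥ w) j := by
  rw [← mulVec_mulVec, ← Pi.add_apply, ← mulVec_add]
  rfl

variable {B i L}

theorem mulVec_mulVec_add_self (hiL : B i ᵥ* L = 0) : (B *ᵥ (L *ᵥ y + w)) i = B i ⬝ᵥ w := by
  change B i ⬝ᵥ (L *ᵥ y + w) = B i ⬝ᵥ w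
  rw [dotProduct_add, dotProduct_mulVec, hiL, zero_dotProduct, zero_add]

theorem mulVec_mulVec_add_le_update_iff (hiL : B i ᵥ* L = 0) (x : Fin (m + 1) → ℝ) (s : ℝ) :
    B *ᵥ (L *ᵥ y + w) ≤ Function.update x i s ↔
      B i ⬝ᵥ w ≤ s ∧ (B.submatrix i.succAbove id * L) *ᵥ y ≤
        i.removeNth x - B.submatrix i.succAbove id *ᵥ w := by
  simp only [Pi.le_def, Fin.forall_iff_succAbove i, mulVec_mulVec_add_self y w hiL,
    mulVec_mulVec_add_succAbove, Function.update_self, Function.update_of_ne (i.succAbove_ne _),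
    Pi.add_apply, Fin.removeNth_apply, le_sub_iff_add_le]

end Reduction

namespace NondegenerateSystem

variable {m k p : ℕ}

theorem row_ne_zero {A : Matrix (Fin m) (Fin k) ℝ} {c : Fin m → ℝ}
    (hnd : NondegenerateSystem A c) {y : Fin k → ℝ} (hy : A *ᵥ y ≤ c) {j : Fin m}
    (hj : (A *ᵥ y) j = c j) : A j ≠ 0 := by
  classical
  have hactive := hnd {j | (A *ᵥ y) j = c j}
    ⟨y, fun j hj => (Finset.mem_filter_univ j).1 hj, fun j hj =>
      (hy j).lt_of_ne fun h => hj ((Finset.mem_filter_univ j).2 h)⟩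
  exact hactive.ne_zero ⟨j, (Finset.mem_filter_univ j).2 hj⟩

theorem continuousAt_measureReal {A : Matrix (Fin m) (Fin k) ℝ} {c : Fin m → ℝ}
    (hnd : NondegenerateSystem A c) {ν : Measure (Fin k → ℝ)} [IsFiniteMeasure ν]
    (hν : ν ≪ volume) : ContinuousAt (fun d => ν.real {y | A *ᵥ y ≤ d}) c := by
  have hmeas : ∀ d, MeasurableSet {y : Fin k → ℝ | A *ᵥ y ≤ d} := by measurability
  have hae : ∀ᵐ y ∂ν, ∀ j, A j ≠ 0 → (A *ᵥ y) j ≠ c j := by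
    simp only [ae_all_iff]
    exact fun j hj => measure_eq_zero_iff_ae_notMem.1 (hν (volume_setOf_dotProduct_eq hj (c j)))
  refine (ENNReal.tendsto_toReal (measure_ne_top ν _)).comp
    (tendsto_measure_of_ae_tendsto_indicator_of_isFiniteMeasure _ (hmeas c) hmeas ?_)
  filter_upwards [hae] with y hy
  by_cases hyc : A *ᵥ y ≤ c
  · have hlt : ∀ j, (A *ᵥ y) j < c j := fun j =>
      (hyc j).lt_of_ne fun hj => hy j (hnd.row_ne_zero hyc hj) hj
    have hnear : ∀ᶠ d in nhds c, ∀ j, (A *ᵥ y) j < d j := eventually_all.2 fun j =>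
      (continuous_apply j).continuousAt.eventually_const_lt (hlt j)
    filter_upwards [hnear] with d hd
    exact iff_of_true (fun j => (hd j).le) hyc
  · filter_upwards [isClosed_Ici.isOpen_compl.mem_nhds hyc] with d hd
    exact iff_of_false hd hyc

theorem reduce {B : Matrix (Fin (m + 1)) (Fin p) ℝ} {x : Fin (m + 1) → ℝ}
    (hnd : NondegenerateSystem B x) {i : Fin (m + 1)} {L : Matrix (Fin p) (Fin k) ℝ}
    {w : Fin p → ℝ} (hw : B i ⬝ᵥ w = x i)
    (hL : LinearMap.ker L.vecMulLinear = Submodule.span ℝ {B i}) :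
    NondegenerateSystem (B.submatrix i.succAbove id * L)
      (i.removeNth x - B.submatrix i.succAbove id *ᵥ w) := by
  rintro I ⟨y, hactive, hinactive⟩
  have hiL : B i ᵥ* L = 0 := LinearMap.mem_ker.1 (hL ▸ Submodule.mem_span_singleton_self (B i))
  have hself : B i ⬝ᵥ (L *ᵥ y + w) = x i := (mulVec_mulVec_add_self y w hiL).trans hw
  have hother : ∀ j, B (i.succAbove j) ⬝ᵥ (L *ᵥ y + w) =
      (B.submatrix i.succAbove id * L) j ⬝ᵥ y + (B.submatrix i.succAbove id *ᵥ w) j :=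
    mulVec_mulVec_add_succAbove B i L y w
  have hmem : ∀ j, i.succAbove j ∈ insert i (I.map i.succAboveEmb) ↔ j ∈ I := by
    simp [Fin.succAbove_ne]
  have hindep : LinearIndepOn ℝ (fun a => B a) ↑(insert i (I.map i.succAboveEmb)) := by
    refine hnd _ ⟨L *ᵥ y + w, (Fin.forall_iff_succAbove i).2 ⟨fun _ => hself, fun j hj => ?_⟩,
      (Fin.forall_iff_succAbove i).2
        ⟨fun hi => absurd (Finset.mem_insert_self _ _) hi, fun j hj => ?_⟩⟩
    · rw [hother, hactive j ((hmem j).1 hj)]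
      exact sub_add_cancel _ _
    · rw [hother]
      exact lt_sub_iff_add_lt.1 (hinactive j (mt (hmem j).2 hj))
  rw [Finset.coe_insert, Finset.coe_map, Fin.coe_succAboveEmb] at hindep
  exact (linearIndepOn_comp_of_ker_eq_span_singleton hindep (by simp [Fin.succAbove_ne])
    L.vecMulLinear hL).comp_of_image i.succAbove_right_injective.injOn

end NondegenerateSystem

section GaussianPolyhedron

variable {k m : ℕ} (μ : Fin (k + 1) → ℝ) {Sig : Matrix (Fin (k + 1)) (Fin (k + 1)) ℝ}
  {B : Matrix (Fin (m + 1)) (Fin (k + 1)) ℝ} {x : Fin (m + 1) → ℝ} {i : Fin (m + 1)}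
  {L : Matrix (Fin (k + 1)) (Fin k) ℝ}

theorem gaussianMeasure_setOf_mulVec_le_update (hSig : Sig.PosDef)
    (hv : 0 < B i ⬝ᵥ Sig *ᵥ B i) (hL : condCov Sig (B i) = L * Lᵀ) (s : ℝ) :
    gaussianMeasure μ Sig {z | B *ᵥ z ≤ Function.update x i s} =
      ((gaussianReal (B i ⬝ᵥ μ) (B i ⬝ᵥ Sig *ᵥ B i).toNNReal).prod (gaussianMeasure 0 1))
        {p | p.1 ≤ s ∧ (B.submatrix i.succAbove id * L) *ᵥ p.2 ≤
          i.removeNth x - B.submatrix i.succAbove id *ᵥ condMean μ Sig (B i) p.1} := by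
  have hiL : B i ᵥ* L = 0 := LinearMap.mem_ker.1 <|
    ker_vecMulLinear_of_condCov_eq_mul_transpose hSig.isUnit hv.ne' hL ▸
      Submodule.mem_span_singleton_self (B i)
  rw [gaussianMeasure_eq_map_condMean μ hSig hv hL,
    Measure.map_apply (by fun_prop) (by measurability)]
  congr 1
  ext p
  simp only [mem_preimage, mem_ofPred_eq, mulVec_mulVec_add_le_update_iff _ _ hiL,
    dotProduct_condMean μ hv.ne']

theorem hasDerivAt_gaussianMeasure_setOf_mulVec_le_update (hSig : Sig.PosDef)
    (hv : 0 < B i ⬝ᵥ Sig *ᵥ B i) (hL : condCov Sig (B i) = L * Lᵀ)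
    (hnd : NondegenerateSystem (B.submatrix i.succAbove id * L)
      (i.removeNth x - B.submatrix i.succAbove id *ᵥ condMean μ Sig (B i) (x i))) :
    HasDerivAt (fun s => (gaussianMeasure μ Sig).real {z | B *ᵥ z ≤ Function.update x i s})
      (gaussianPDFReal (B i ⬝ᵥ μ) (B i ⬝ᵥ Sig *ᵥ B i).toNNReal (x i) *
        (gaussianMeasure 0 1).real {y | (B.submatrix i.succAbove id * L) *ᵥ y ≤
          i.removeNth x - B.submatrix i.succAbove id *ᵥ condMean μ Sig (B i) (x i)})
      (x i) := by
  have hv₀ : (B i ⬝ᵥ Sig *ᵥ B i).toNNReal ≠ 0 := (Real.toNNReal_pos.2 hv).ne'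
  have hpdf : Continuous (gaussianPDFReal (B i ⬝ᵥ μ) (B i ⬝ᵥ Sig *ᵥ B i).toNNReal) := by
    unfold gaussianPDFReal
    fun_prop
  have hP : MeasurableSet {p : ℝ × (Fin k → ℝ) | (B.submatrix i.succAbove id * L) *ᵥ p.2 ≤
      i.removeNth x - B.submatrix i.succAbove id *ᵥ condMean μ Sig (B i) p.1} :=
    (isClosed_le (by fun_prop) (by fun_prop)).measurableSet
  have hrhs : Continuous fun t =>
      i.removeNth x - B.submatrix i.succAbove id *ᵥ condMean μ Sig (B i) t := by fun_prop
  have hslice := (hnd.continuousAt_measureReal (ν := gaussianMeasure 0 1)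
    (withDensity_absolutelyContinuous _ _)).comp (f := fun t =>
      i.removeNth x - B.submatrix i.succAbove id *ᵥ condMean μ Sig (B i) t) hrhs.continuousAt
  simp only [measureReal_def, gaussianMeasure_setOf_mulVec_le_update μ hSig hv hL,
    gaussianReal_of_var_ne_zero _ hv₀]
  exact hasDerivAt_measureReal_withDensity_prod (integrable_gaussianPDFReal _ _)
    (gaussianPDFReal_nonneg _ _) hP hpdf.continuousAt hslice

end GaussianPolyhedron


/-- Henrion–Möller gradient formula: for `ξ ∼ 𝒩(μ, Σ)` with `Σ ≻ 0`
and a nondegenerate system `Bz ≤ x`,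
`∂/∂xᵢ Pr{Bξ ≤ x} = gᵢ(xᵢ) · Pr{B⁽ⁱ⁾L⁽ⁱ⁾ξ⁽ⁱ⁾ ≤ x⁽ⁱ⁾ - B⁽ⁱ⁾w⁽ⁱ⁾}` with `ξ⁽ⁱ⁾`
standard Gaussian in dimension `k - 1`, and the reduced system is again
nondegenerate. -/
theorem henrion_moller_gradient
    {k m : ℕ}
    (μ : Fin (k + 1) → ℝ) (Sig : Matrix (Fin (k + 1)) (Fin (k + 1)) ℝ)
    (hSig : Sig.PosDef)
    (B : Matrix (Fin (m + 1)) (Fin (k + 1)) ℝ) (x : Fin (m + 1) → ℝ)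
    (hnd : NondegenerateSystem B x)
    (i : Fin (m + 1))
    -- `S⁽ⁱ⁾ = Σ - (1/(bᵢᵀΣbᵢ)) Σbᵢbᵢᵀ Σ` and
    -- `w⁽ⁱ⁾ = μ + ((xᵢ - bᵢᵀμ)/(bᵢᵀΣbᵢ)) Σbᵢ`
    (S : Matrix (Fin (k + 1)) (Fin (k + 1)) ℝ)
    (hS : S = Sig - (B i ⬝ᵥ Sig.mulVec (B i))⁻¹ •
      vecMulVec (Sig.mulVec (B i)) (vecMul (B i) Sig))
    (w : Fin (k + 1) → ℝ)
    (hw : w = μ + ((x i - B i ⬝ᵥ μ) / (B i ⬝ᵥ Sig.mulVec (B i))) • Sig.mulVec (B i))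
    -- the factorization `S⁽ⁱ⁾ = L⁽ⁱ⁾ (L⁽ⁱ⁾)ᵀ` with `L⁽ⁱ⁾` of full column rank `k`
    (L : Matrix (Fin (k + 1)) (Fin k) ℝ)
    (hL : S = L * L.transpose) (hrank : L.rank = k)
    -- the one-dimensional normal density `gᵢ` with mean `bᵢᵀμ` and variance `bᵢᵀΣbᵢ`
    (g : ℝ → ℝ)
    (hg : ∀ s, g s = (Real.sqrt (2 * Real.pi * (B i ⬝ᵥ Sig.mulVec (B i))))⁻¹ *
      Real.exp (-(s - B i ⬝ᵥ μ) ^ 2 / (2 * (B i ⬝ᵥ Sig.mulVec (B i))))) :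
    HasDerivAt
      (fun s =>
        (gaussianMeasure μ Sig
          {z | ∀ j, B.mulVec z j ≤ Function.update x i s j}).toReal)
      (g (x i) *
        (gaussianMeasure (0 : Fin k → ℝ) (1 : Matrix (Fin k) (Fin k) ℝ)
          {y | ∀ j : Fin m,
            (B.submatrix i.succAbove id * L).mulVec y j ≤
              x (i.succAbove j) - (B.submatrix i.succAbove id).mulVec w j}).toReal)
      (x i) ∧
    NondegenerateSystem (B.submatrix i.succAbove id * L)
      (fun j => x (i.succAbove j) - (B.submatrix i.succAbove id).mulVec w j) := by
  have hLc : condCov Sig (B i) = L * Lᵀ := hS.symm.trans hL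
  have hv : 0 < B i ⬝ᵥ Sig *ᵥ B i := by
    simpa using hSig.dotProduct_mulVec_pos
      (ne_zero_of_condCov_eq_mul_transpose hSig.isUnit hLc (by simp))
  have hker := ker_vecMulLinear_of_condCov_eq_mul_transpose hSig.isUnit hv.ne' hLc
  have hg_eq : g (x i) = gaussianPDFReal (B i ⬝ᵥ μ) (B i ⬝ᵥ Sig *ᵥ B i).toNNReal (x i) := by
    rw [hg, gaussianPDFReal, Real.coe_toNNReal _ hv.le]
  obtain rfl : w = condMean μ Sig (B i) (x i) := hw
  have hred := hnd.reduce (dotProduct_condMean μ hv.ne' (x i)) hker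
  rw [hg_eq]
  exact ⟨hasDerivAt_gaussianMeasure_setOf_mulVec_le_update μ hSig hv hLc hred, hred⟩
end

section
/- Let X be a bounded random variable and take the utility function u(z) = 1 − e^{−z} (which is concave, nondecreasing, normalized with u(0) = 0 and u'(0) = 1). Then the OCE risk measure equals the entropic risk measure: −sup_{η∈ℝ} { η + E[1 − e^{−(X−η)}] } = log E[e^{−X}], i.e., the supremum over η of η + E[u(X−η)] equals −log E[e^{−X}]. -/
open MeasureTheory ProbabilityTheory Filter Set

/-!
Since `e^{-(X-η)} = e^η e^{-X}`, the objective depends on `X` only through `a = E[e^{-X}]`: it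
equals `η + 1 - e^{η + log a}`. The inequality `t + 1 ≤ e^t` at `t = η + log a` bounds it by
`-log a`, with equality at `η = -log a`.
-/

lemma isGreatest_range_add_one_sub_exp_mul {a : ℝ} (ha : 0 < a) :
    IsGreatest (range fun η : ℝ => η + (1 - Real.exp η * a)) (-Real.log a) := by
  constructor
  · exact ⟨-Real.log a, by simp [Real.exp_neg, Real.exp_log ha, ha.ne']⟩
  · rintro _ ⟨η, rfl⟩
    have tangent_line : η + Real.log a + 1 ≤ Real.exp η * a := by
      simpa only [Real.exp_add, Real.exp_log ha] using Real.add_one_le_exp (η + Real.log a)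
    linarith

section

variable {Ω : Type*} [MeasurableSpace Ω] {μ : Measure Ω} {X : Ω → ℝ}

lemma integrable_exp_neg_of_ae_abs_le [IsFiniteMeasure μ] {C : ℝ} (hX : AEMeasurable X μ)
    (hC : ∀ᵐ ω ∂μ, |X ω| ≤ C) : Integrable (fun ω => Real.exp (-X ω)) μ := by
  simpa only [neg_one_mul] using
    integrable_exp_mul_of_mem_Icc (t := -1) hX (hC.mono fun _ hω => abs_le.mp hω)

lemma integral_one_sub_exp_neg_sub [IsFiniteMeasure μ]
    (hX : Integrable (fun ω => Real.exp (-X ω)) μ) (η : ℝ) :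
    ∫ ω, (1 - Real.exp (-(X ω - η))) ∂μ =
      μ.real univ - Real.exp η * ∫ ω, Real.exp (-X ω) ∂μ := by
  have exp_shift (ω : Ω) : Real.exp (-(X ω - η)) = Real.exp η * Real.exp (-X ω) := by
    rw [← Real.exp_add, neg_sub, sub_eq_add_neg]
  simp only [exp_shift]
  rw [integral_sub (integrable_const 1) (hX.const_mul _), integral_const_mul, integral_const,
    smul_eq_mul, mul_one]

theorem oce_exponential_utility_entropic_general [IsProbabilityMeasure μ]
    (hX : Integrable (fun ω => Real.exp (-X ω)) μ) :
    IsGreatest (range fun η : ℝ => η + ∫ ω, (1 - Real.exp (-(X ω - η))) ∂μ)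
      (-Real.log (∫ ω, Real.exp (-X ω) ∂μ)) := by
  simpa only [integral_one_sub_exp_neg_sub hX, probReal_univ] using
    isGreatest_range_add_one_sub_exp_mul (integral_exp_pos hX)

end

/-- For the exponential utility `u(z) = 1 - e^{-z}` and a bounded
random variable `X`, the OCE risk measure is the entropic risk measure:
`-sup_{η∈ℝ} {η + E[1 - e^{-(X-η)}]} = log E[e^{-X}]`, i.e.
`sup_{η∈ℝ} {η + E[u(X-η)]} = -log E[e^{-X}]`. -/
theorem oce_exponential_utility_entropic
    {Ω : Type*} [MeasurableSpace Ω] (P : Measure Ω) [IsProbabilityMeasure P]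
    (X : Ω → ℝ) (hX : Measurable X)
    (hbdd : ∃ C : ℝ, ∀ᵐ ω ∂P, |X ω| ≤ C) :
    (-⨆ η : ℝ, (η + ∫ ω, (1 - Real.exp (-(X ω - η))) ∂P)) =
      Real.log (∫ ω, Real.exp (-X ω) ∂P) ∧
    (⨆ η : ℝ, (η + ∫ ω, (1 - Real.exp (-(X ω - η))) ∂P)) =
      -Real.log (∫ ω, Real.exp (-X ω) ∂P) := by
  obtain ⟨C, hC⟩ := hbdd
  have hsup := (oce_exponential_utility_entropic_general
    (integrable_exp_neg_of_ae_abs_le hX.aemeasurable hC)).csSup_eq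
  exact ⟨neg_eq_iff_eq_neg.mpr hsup, hsup⟩
end
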